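/- The function d₂(x) = π₂(x) − C₂·Li₂(x) has at least 238 sign changes on the interval (2, 2^26): there exist real numbers x₀ < x₁ < ⋯ < x_{238} in (2, 2^26) such that d₂(x_i)·d₂(x_{i+1}) < 0 for all 0 ≤ i < 238. -/

import Mathlib

open Real Filter Set

/-- `Li₂(x) = ∫₂ˣ dt/(log t)²`. -/
noncomputable def Li2 (x : ℝ) : ℝ := ∫ t in (2:ℝ)..x, 1 / (Real.log t) ^ 2

/-- `π₂(x)`: the number of primes `p` with `p+2` also prime and `p+2 ≤ x`. -/
noncomputable def piTwin (x : ℝ) : ℕ :=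
  Nat.card {p : ℕ | p.Prime ∧ (p + 2).Prime ∧ ((p : ℝ) + 2) ≤ x}

/-- The twin prime constant `C₂ = 2·∏_{p prime, p>2} (1 − 1/(p−1)²)`. -/
noncomputable def C2 : ℝ :=
  2 * ∏' p : {p : ℕ // p.Prime ∧ 2 < p}, (1 - 1 / (((p : ℕ) : ℝ) - 1) ^ 2)

/-- `d₂(x) = π₂(x) − C₂·Li₂(x)`. -/
noncomputable def d2 (x : ℝ) : ℝ := (piTwin x : ℝ) - C2 * Li2 x

/-!
Every pair of twin primes other than `(3, 5)` has the form `6k ± 1`. Hence, at `x = 6n`, the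
function `d₂` takes the value `1 + T(n) - C₂ · Li₂(6n)`, where `T(n)` counts the *twin indices*
`k < n`, and it suffices to exhibit 239 values of `n` at which the signs of these numbers alternate.
The three terms are evaluated as follows.

* `T(n)` is computed exactly by sieving blocks of `2 ^ 18` indices. The marks made by a prime in a
  block are the bits of a single natural number, whose binary expansion is periodic; so the sieve is
  a bitwise disjunction, and counting reduces to casting out `2 ^ 16 - 1`.
* `C₂ / 2 * ζ(2)` is an Euler product with factors `1 - O(p⁻³)`, which converges fast enough for
  its partial products to determine `C₂`, since `ζ(2) = π² / 6`.
* The substitution `u = log t` turns `Li₂` into an integral of `eᵘ / u²`. Replacing `eᵘ` by a Taylor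
  polynomial leaves an integrand whose primitive is elementary.
-/

section DyadicFold

/-- The combination `f lo ∘ f (lo + 1) ∘ ⋯ ∘ f (lo + 2 ^ j - 1)` under a binary operation, bracketed
as a balanced binary tree: the kernel evaluates it with recursion depth `j` only. -/
def dyadicFold {α : Type*} (op : α → α → α) (f : ℕ → α) : ℕ → ℕ → α
  | 0, lo => f lo
  | j + 1, lo => op (dyadicFold op f j lo) (dyadicFold op f j (lo + 2 ^ j))

@[to_additive]
theorem dyadicFold_mul {M : Type*} [CommMonoid M] (f : ℕ → M) (j lo : ℕ) :
    dyadicFold (· * ·) f j lo = ∏ i ∈ Finset.Ico lo (lo + 2 ^ j), f i := by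
  induction j generalizing lo with
  | zero => simp [dyadicFold]
  | succ j ih =>
    rw [dyadicFold, ih, ih, Finset.prod_Ico_consecutive _ (by lia) (by lia), pow_succ, mul_two,
      add_assoc]

theorem testBit_dyadicFold_lor (f : ℕ → ℕ) (j lo i : ℕ) :
    (dyadicFold (· ||| ·) f j lo).testBit i ↔
      ∃ q, lo ≤ q ∧ q < lo + 2 ^ j ∧ (f q).testBit i := by
  induction j generalizing lo with
  | zero =>
    refine ⟨fun h => ⟨lo, le_rfl, by simp, h⟩, fun ⟨q, hlo, hq, h⟩ => ?_⟩
    obtain rfl : q = lo := by lia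
    exact h
  | succ j ih =>
    rw [dyadicFold, Nat.testBit_or, Bool.or_eq_true, ih, ih]
    constructor
    · rintro (⟨q, hlo, hq, h⟩ | ⟨q, hlo, hq, h⟩)
      · exact ⟨q, hlo, by lia, h⟩
      · exact ⟨q, by lia, by lia, h⟩
    · rintro ⟨q, hlo, hq, h⟩
      obtain hlt | hle := lt_or_ge q (lo + 2 ^ j)
      · exact .inl ⟨q, hlo, hlt, h⟩
      · exact .inr ⟨q, hle, by lia, h⟩

end DyadicFold

section Primality

theorem not_prime_iff_exists_prime_lt_dvd {b n : ℕ} (hb : b ≤ n) (hn : n < b ^ 2) :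
    ¬ n.Prime ↔ ∃ q < b, q.Prime ∧ q ∣ n := by
  have hb_two : 2 ≤ b := by nlinarith
  constructor
  · intro h
    have hsq : n.minFac ^ 2 ≤ n := Nat.minFac_sq_le_self (by lia) h
    exact ⟨n.minFac, lt_of_pow_lt_pow_left₀ 2 (by lia) (hsq.trans_lt hn),
      Nat.minFac_prime (by lia), Nat.minFac_dvd n⟩
  · rintro ⟨q, hqb, hq, hqn⟩ hn_prime
    rw [Nat.prime_dvd_prime_iff_eq hq hn_prime] at hqn
    lia

theorem prime_iff_coprime_factorial {d n : ℕ} (hd : d < n) (hn : n < (d + 1) ^ 2) :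
    n.Prime ↔ n.Coprime d.factorial := by
  rw [← not_iff_not, not_prime_iff_exists_prime_lt_dvd hd hn, Nat.Prime.not_coprime_iff_dvd]
  exact exists_congr fun q =>
    ⟨fun ⟨hqd, hq, hqn⟩ => ⟨hq, hqn, hq.dvd_factorial.2 (Nat.le_of_lt_succ hqd)⟩,
      fun ⟨hq, hqn, hqd⟩ => ⟨Nat.lt_succ_of_le (hq.dvd_factorial.1 hqd), hq, hqn⟩⟩

/-- A primality test for `p < 2 ^ 14`, by coprimality to all numbers below `min p 128`. -/
def isSmallPrime (p : ℕ) : Bool :=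
  Nat.ble 2 p && Nat.gcd p (bif Nat.ble p 127 then (p - 1).factorial else Nat.factorial 127) == 1

theorem isSmallPrime_iff {p : ℕ} (hp : p < 2 ^ 14) : isSmallPrime p ↔ p.Prime := by
  obtain hp_two | hp_two := lt_or_ge p 2
  · have : ¬ p.Prime := fun h => by linarith [h.two_le]
    simp [isSmallPrime, this, hp_two]
  rw [isSmallPrime, Nat.ble_eq_true_of_le hp_two, Bool.true_and, beq_iff_eq]
  obtain h | h := le_or_gt p 127
  · rw [Nat.ble_eq_true_of_le h, cond_true, prime_iff_coprime_factorial (d := p - 1) (by lia)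
      (by rw [Nat.sub_add_cancel (by lia)]; nlinarith), Nat.Coprime]
  · have h_ble : Nat.ble p 127 = false := by rwa [Bool.eq_false_iff, ne_eq, Nat.ble_eq, not_le]
    rw [h_ble, cond_false, prime_iff_coprime_factorial h (by lia), Nat.Coprime]

end Primality

section TwinIndex

/-- `k` is a twin index if `6k ± 1` are both prime; every pair of twin primes other than `(3, 5)`
arises in this way. -/
def IsTwinIndex (k : ℕ) : Prop := (6 * k - 1).Prime ∧ (6 * k + 1).Prime

instance : DecidablePred IsTwinIndex := fun _ => inferInstanceAs (Decidable (_ ∧ _))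

theorem not_isTwinIndex_iff {b k : ℕ} (hb : b < 6 * k) (hk : 6 * k + 1 < b ^ 2) :
    ¬ IsTwinIndex k ↔ ∃ q < b, q.Prime ∧ (q ∣ 6 * k - 1 ∨ q ∣ 6 * k + 1) := by
  rw [IsTwinIndex, not_and_or, not_prime_iff_exists_prime_lt_dvd (b := b) (by lia) (by lia),
    not_prime_iff_exists_prime_lt_dvd (by lia) hk]
  simp only [and_or_left, exists_or]

theorem five_le_of_dvd_six_mul_sub_or_add {q k : ℕ} (hk : 0 < k) (hq : q.Prime)
    (h : q ∣ 6 * k - 1 ∨ q ∣ 6 * k + 1) : 5 ≤ q := by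
  by_contra! hlt
  have := hq.two_le
  interval_cases q
  · lia
  · lia
  · exact absurd hq (by decide)

/-- For a prime `q ≥ 5`, write `q = 6 m ± 1`. Modulo `q`, the numbers `6 k` and `6 m` are then both
`± 1`. -/
theorem dvd_six_mul_sub_or_add_iff {q k : ℕ} (hq : q.Prime) (hq5 : 5 ≤ q) (hk : 0 < k) :
    q ∣ 6 * k - 1 ∨ q ∣ 6 * k + 1 ↔ k % q = (q + 1) / 6 ∨ k % q = q - (q + 1) / 6 := by
  have : Fact q.Prime := ⟨hq⟩
  obtain ⟨m, hm⟩ : ∃ m, m = (q + 1) / 6 := ⟨_, rfl⟩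
  have h6 : (6 : ZMod q) ≠ 0 := by
    intro h
    have : q ∣ 2 * 3 := (ZMod.natCast_eq_zero_iff 6 q).1 h
    rw [hq.dvd_mul, Nat.prime_dvd_prime_iff_eq hq Nat.prime_two,
      Nat.prime_dvd_prime_iff_eq hq Nat.prime_three] at this
    lia
  have hqm : q + 1 = 6 * m ∨ q = 6 * m + 1 := by
    have h2 : ¬ 2 ∣ q := fun h => by rw [Nat.prime_dvd_prime_iff_eq Nat.prime_two hq] at h; lia
    have h3 : ¬ 3 ∣ q := fun h => by rw [Nat.prime_dvd_prime_iff_eq Nat.prime_three hq] at h; lia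
    lia
  have hm_eq : (6 * m : ZMod q) = 1 ∨ (6 * m : ZMod q) = -1 := by
    obtain h | h := hqm
    · left; simpa using (congrArg (Nat.cast : ℕ → ZMod q) h).symm
    · right; rw [eq_neg_iff_add_eq_zero]; simpa using (congrArg (Nat.cast : ℕ → ZMod q) h).symm
  have hk_sub : q ∣ 6 * k - 1 ↔ (6 * k : ZMod q) = 1 := by
    rw [← ZMod.natCast_eq_zero_iff, Nat.cast_sub (by lia), sub_eq_zero]; simp
  have hk_add : q ∣ 6 * k + 1 ↔ (6 * k : ZMod q) = -1 := by
    rw [← ZMod.natCast_eq_zero_iff, eq_neg_iff_add_eq_zero]; simp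
  have hmod (r : ℕ) (hr : r < q) : k % q = r ↔ (6 * k : ZMod q) = 6 * r := by
    rw [mul_right_inj' h6, ZMod.natCast_eq_natCast_iff', Nat.mod_eq_of_lt hr]
  rw [← hm, hmod m (by lia), hmod (q - m) (by lia), hk_sub, hk_add, Nat.cast_sub (by lia)]
  obtain h | h := hm_eq <;> simp [h, or_comm]

end TwinIndex

section Sieve

/-- The number `∑ j < n, 2 ^ (q j)`, whose binary expansion marks the multiples of `q` below `q n`;
written as a quotient so that it is computed in a single step. -/
def repunit (q n : ℕ) : ℕ := (2 ^ (q * n) - 1) / (2 ^ q - 1)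

theorem repunit_zero (q : ℕ) : repunit q 0 = 0 := by simp [repunit]

theorem repunit_succ {q : ℕ} (hq : 0 < q) (n : ℕ) :
    repunit q (n + 1) = 2 ^ q * repunit q n + 1 := by
  have h (n : ℕ) : repunit q n = ∑ j ∈ Finset.range n, (2 ^ q) ^ j := by
    rw [Nat.geomSum_eq (Nat.le_self_pow hq.ne' 2), repunit, pow_mul]
  rw [h, h, Finset.sum_range_succ', Finset.mul_sum]
  simp [pow_succ, mul_comm]

theorem testBit_mul_repunit {q r : ℕ} (hr : r < 2 ^ q) (n i : ℕ) :
    (r * repunit q n).testBit i = (decide (i < q * n) && r.testBit (i % q)) := by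
  obtain rfl | hq := q.eq_zero_or_pos
  · simp [show r = 0 by simpa using hr]
  induction n generalizing i with
  | zero => simp [repunit_zero]
  | succ n ih =>
    rw [repunit_succ hq, show r * (2 ^ q * repunit q n + 1) = 2 ^ q * (r * repunit q n) + r by ring,
      Nat.testBit_two_pow_mul_add _ hr]
    split_ifs with h
    · simp [Nat.mod_eq_of_lt h, h.trans_le (Nat.le_mul_of_pos_right q n.succ_pos)]
    · rw [ih, ← Nat.mod_eq_sub_mod (not_lt.1 h), mul_add, mul_one]
      congr 2
      exact propext (by lia)

/-- If `q ≥ 5` is prime, the bits `i < s` of this number mark those `i` for which `q` divides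
`6 (a + i) - 1` or `6 (a + i) + 1`; otherwise there are no marks. -/
def sieveMark (a s q : ℕ) : ℕ :=
  bif Nat.ble 5 q && isSmallPrime q then
    ((2 ^ ((q + 1) / 6) ||| 2 ^ (q - (q + 1) / 6)) * repunit q (s / q + 2)) >>> (a % q)
  else 0

theorem testBit_sieveMark {a s q i : ℕ} (ha : 0 < a) (hi : i < s) (hq : q < 2 ^ 14) :
    (sieveMark a s q).testBit i ↔ q.Prime ∧ (q ∣ 6 * (a + i) - 1 ∨ q ∣ 6 * (a + i) + 1) := by
  by_cases h : q.Prime ∧ 5 ≤ q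
  · obtain ⟨hq_prime, hq5⟩ := h
    have h_mod : (a % q + i) % q = (a + i) % q := Nat.mod_add_mod a q i
    have h_lt : a % q + i < q * (s / q + 2) := by
      have := Nat.lt_mul_div_succ s (by lia : 0 < q)
      have := Nat.mod_lt a (by lia : 0 < q)
      linarith
    have h_pat : 2 ^ ((q + 1) / 6) ||| 2 ^ (q - (q + 1) / 6) < 2 ^ q :=
      Nat.or_lt_two_pow (Nat.pow_lt_pow_right one_lt_two (by lia))
        (Nat.pow_lt_pow_right one_lt_two (by lia))
    rw [sieveMark, Nat.ble_eq_true_of_le hq5, (isSmallPrime_iff hq).2 hq_prime, Bool.true_and,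
      cond_true, Nat.testBit_shiftRight, testBit_mul_repunit h_pat, h_mod]
    simp [h_lt, hq_prime, dvd_six_mul_sub_or_add_iff hq_prime hq5, ha, Nat.testBit_two_pow,
      @eq_comm _ (_ % q)]
  · have h_bool : (Nat.ble 5 q && isSmallPrime q) = false := by
      rw [Bool.eq_false_iff, ne_eq, Bool.and_eq_true, isSmallPrime_iff hq, Nat.ble_eq, and_comm]
      exact h
    rw [sieveMark, h_bool, cond_false, Nat.zero_testBit]
    simp only [Bool.false_eq_true, false_iff, not_and]
    exact fun hq_prime h_dvd =>
      h ⟨hq_prime, five_le_of_dvd_six_mul_sub_or_add (by lia) hq_prime h_dvd⟩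

/-- Bit `i < s` is set when `6 (a + i) - 1` or `6 (a + i) + 1` has a prime factor below `2 ^ j`. -/
def sieve (j a s : ℕ) : ℕ := dyadicFold (· ||| ·) (sieveMark a s) j 0

theorem testBit_sieve {j a s i : ℕ} (hj : j ≤ 14) (ha : 2 ^ j < 6 * a)
    (hs : 6 * (a + s) < 2 ^ (2 * j)) (hi : i < s) :
    (sieve j a s).testBit i ↔ ¬ IsTwinIndex (a + i) := by
  have hj14 : 2 ^ j ≤ 2 ^ 14 := Nat.pow_le_pow_right two_pos hj
  rw [sieve, testBit_dyadicFold_lor, not_isTwinIndex_iff (b := 2 ^ j) (by lia)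
    (by rw [← pow_mul, mul_comm]; lia)]
  refine exists_congr fun q => ?_
  simp only [zero_le, zero_add, true_and]
  exact and_congr_right fun hq => testBit_sieveMark (by lia) hi (by lia)

end Sieve

section BitCount

/-- The number of nonzero bits of `x` below position `w n`, provided that `n < 2 ^ w - 1`: the bits
in each residue class modulo `w` are added by casting out `2 ^ w - 1`. -/
def bitCount (w n x : ℕ) : ℕ :=
  ∑ i ∈ Finset.range w, (x >>> i &&& repunit w n) % (2 ^ w - 1)

theorem two_pow_mul_add_land {w r r' : ℕ} (hr : r < 2 ^ w) (hr' : r' < 2 ^ w) (q q' : ℕ) :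
    (2 ^ w * q + r) &&& (2 ^ w * q' + r') = 2 ^ w * (q &&& q') + (r &&& r') := by
  refine Nat.eq_of_testBit_eq fun i => ?_
  rw [Nat.testBit_and, Nat.testBit_two_pow_mul_add _ hr, Nat.testBit_two_pow_mul_add _ hr',
    Nat.testBit_two_pow_mul_add _ (Nat.and_le_left.trans_lt hr)]
  split_ifs <;> simp

theorem land_repunit_modEq {w : ℕ} (hw : 0 < w) (n x : ℕ) :
    x &&& repunit w n ≡ Nat.count (fun j => x.testBit (w * j)) n [MOD 2 ^ w - 1] := by
  induction n generalizing x with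
  | zero => simp [repunit_zero, Nat.ModEq.refl]
  | succ n ih =>
    have h_pow : 2 ^ w ≡ 1 [MOD 2 ^ w - 1] :=
      ((Nat.modEq_iff_dvd' Nat.one_le_two_pow).2 dvd_rfl).symm
    have h_low : x % 2 ^ w &&& 1 = (x.testBit 0).toNat := by
      rw [Nat.and_one_is_mod, Nat.mod_mod_of_dvd _ (dvd_pow_self 2 hw.ne'), Nat.testBit_zero]
      obtain h | h := Nat.mod_two_eq_zero_or_one x <;> simp [h]
    have h_split : x &&& repunit w (n + 1) =
        2 ^ w * (x / 2 ^ w &&& repunit w n) + (x.testBit 0).toNat := by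
      conv_lhs => rw [← Nat.div_add_mod x (2 ^ w), repunit_succ hw]
      rw [two_pow_mul_add_land (Nat.mod_lt _ (by positivity)) (Nat.one_lt_two_pow hw.ne'), h_low]
    have h_count : Nat.count (fun j => x.testBit (w * j)) (n + 1) =
        1 * Nat.count (fun j => (x / 2 ^ w).testBit (w * j)) n + (x.testBit 0).toNat := by
      rw [Nat.count_succ', one_mul, mul_zero, Bool.toNat, Bool.cond_eq_ite]
      simp only [Nat.testBit_div_two_pow, mul_add, mul_one, add_comm]
    rw [h_split, h_count]
    exact (h_pow.mul (ih _)).add_right _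

theorem count_mul (p : ℕ → Prop) [DecidablePred p] (w n : ℕ) :
    Nat.count p (w * n) = ∑ i ∈ Finset.range w, Nat.count (fun j => p (w * j + i)) n := by
  induction n with
  | zero => simp
  | succ n ih =>
    simp only [mul_add, mul_one, Nat.count_add, Nat.count_succ, Finset.sum_add_distrib, ih,
      Nat.count_eq_card_filter_range _ w, Finset.card_filter]

theorem bitCount_eq {w n : ℕ} (hn : n < 2 ^ w - 1) (x : ℕ) :
    bitCount w n x = Nat.count (x.testBit ·) (w * n) := by
  have hw : 0 < w := by
    by_contra! h
    simp [Nat.le_zero.1 h] at hn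
  rw [bitCount, count_mul]
  refine Finset.sum_congr rfl fun i _ => ?_
  rw [land_repunit_modEq hw n (x >>> i), Nat.mod_eq_of_lt ((Nat.count_le _).trans_lt hn)]
  simp only [Nat.testBit_shiftRight, add_comm]

theorem count_testBit_mod_two_pow {n s : ℕ} (h : n ≤ s) (x : ℕ) :
    Nat.count ((x % 2 ^ n).testBit ·) s = Nat.count (x.testBit ·) n := by
  simp only [Nat.count_eq_card_filter_range, Nat.testBit_mod_two_pow, Bool.and_eq_true,
    decide_eq_true_eq]
  congr 1
  ext i
  simp only [Finset.mem_filter, Finset.mem_range]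
  exact ⟨fun ⟨_, hi⟩ => hi, fun hi => ⟨hi.1.trans_le h, hi⟩⟩

end BitCount

section TwinIndexCount

/-- The number of twin indices below `n`. -/
def twinIndexCount (n : ℕ) : ℕ := Nat.count IsTwinIndex n

theorem count_add_twinIndexCount_add {a n : ℕ} {f : ℕ → Bool}
    (h : ∀ i < n, f i ↔ ¬ IsTwinIndex (a + i)) :
    Nat.count (f ·) n + twinIndexCount (a + n) = n + twinIndexCount a := by
  have h_count : Nat.count (f ·) n = Nat.count (fun i => ¬ IsTwinIndex (a + i)) n :=
    (Nat.count_mono_left fun i hi => (h i hi).1).antisymm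
      (Nat.count_mono_left fun i hi => (h i hi).2)
  have h_not := Finset.card_filter_add_card_filter_not (s := Finset.range n)
    (fun i => IsTwinIndex (a + i))
  rw [Finset.card_range, ← Nat.count_eq_card_filter_range, ← Nat.count_eq_card_filter_range,
    ← h_count] at h_not
  rw [twinIndexCount, Nat.count_add, ← twinIndexCount]
  lia

theorem bitCount_sieve_add_twinIndexCount {j w m a n : ℕ} (hj : j ≤ 14) (hm : m < 2 ^ w - 1)
    (ha : 2 ^ j < 6 * a) (hs : 6 * (a + w * m) < 2 ^ (2 * j)) (hn : n ≤ w * m) :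
    bitCount w m (sieve j a (w * m) % 2 ^ n) + twinIndexCount (a + n) = n + twinIndexCount a := by
  rw [bitCount_eq hm, count_testBit_mod_two_pow hn]
  exact count_add_twinIndexCount_add fun i hi => testBit_sieve hj ha hs (hi.trans_le hn)

theorem twinIndexCount_eq_dyadicFold {j : ℕ} (hj : j ≤ 11) :
    twinIndexCount (2 ^ j) = dyadicFold (· + ·)
      (fun k => bif isSmallPrime (6 * k - 1) && isSmallPrime (6 * k + 1) then 1 else 0) j 0 := by
  rw [dyadicFold_add, zero_add, Nat.Ico_zero_eq_range, twinIndexCount,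
    Nat.count_eq_card_filter_range, Finset.card_filter]
  refine Finset.sum_congr rfl fun k hk => ?_
  have hk_lt : k < 2 ^ 11 :=
    (Finset.mem_range.1 hk).trans_le (Nat.pow_le_pow_right two_pos hj)
  have h_iff : (isSmallPrime (6 * k - 1) && isSmallPrime (6 * k + 1)) = true ↔ IsTwinIndex k := by
    rw [Bool.and_eq_true, isSmallPrime_iff (by lia), isSmallPrime_iff (by lia), IsTwinIndex]
  simp only [Bool.cond_eq_ite, h_iff]

end TwinIndexCount

section PiTwin

theorem exists_eq_six_mul_sub_one {p : ℕ} (hp : p.Prime) (hp2 : (p + 2).Prime) (hp3 : p ≠ 3) :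
    ∃ k, 0 < k ∧ p = 6 * k - 1 := by
  have h3 : 3 ∣ p → 3 = p := (Nat.prime_dvd_prime_iff_eq Nat.prime_three hp).1
  have h2 : 2 ∣ p + 2 → 2 = p + 2 := (Nat.prime_dvd_prime_iff_eq Nat.prime_two hp2).1
  have h3' : 3 ∣ p + 2 → 3 = p + 2 := (Nat.prime_dvd_prime_iff_eq Nat.prime_three hp2).1
  have := hp.two_le
  exact ⟨(p + 1) / 6, by lia, by lia⟩

theorem piTwin_six_mul {n : ℕ} (hn : 0 < n) : piTwin (6 * n) = 1 + twinIndexCount n := by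
  have h_set : {p : ℕ | p.Prime ∧ (p + 2).Prime ∧ (p : ℝ) + 2 ≤ 6 * n} =
      (insert 3 (({k ∈ Finset.range n | IsTwinIndex k}).image (6 * · - 1)) : Finset ℕ) := by
    ext p
    have h_cast : (p : ℝ) + 2 ≤ 6 * n ↔ p + 2 ≤ 6 * n := by norm_cast
    simp only [Set.mem_ofPred_eq, h_cast, Finset.coe_insert, Finset.coe_image, Set.mem_insert_iff,
      Set.mem_image, Finset.mem_coe, Finset.mem_filter, Finset.mem_range]
    constructor
    · rintro ⟨hp, hp2, hpn⟩
      refine or_iff_not_imp_left.2 fun hp3 => ?_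
      obtain ⟨k, hk, rfl⟩ := exists_eq_six_mul_sub_one hp hp2 hp3
      exact ⟨k, ⟨by lia, hp, by convert hp2 using 1; lia⟩, rfl⟩
    · rintro (rfl | ⟨k, ⟨hk, hp, hp2⟩, rfl⟩)
      · exact ⟨Nat.prime_three, by norm_num, by lia⟩
      · have := hp.two_le
        exact ⟨hp, by convert hp2 using 1; lia, by lia⟩
  rw [piTwin, h_set, Nat.card_eq_card_toFinset, Finset.toFinset_coe, Finset.card_insert_of_notMem,
    Finset.card_image_of_injOn, twinIndexCount, Nat.count_eq_card_filter_range, add_comm]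
  · intro k hk l hl hkl
    simp only [Finset.coe_filter, Finset.mem_range, Set.mem_ofPred_eq] at hk hl hkl
    have := hk.2.1.two_le
    have := hl.2.1.two_le
    lia
  · simp only [Finset.mem_image, not_exists]
    lia

end PiTwin

section TwinPrimeConstant

/-- The factor at the prime `p` of the Euler product of `C₂ / 2 * ζ(2)`. This product converges
faster than the one defining `C₂`: the factor is `1 - O(p⁻³)`. -/
def twinZetaFactor (K : Type*) [Field K] (p : ℕ) : K :=
  if p = 2 then 4 / 3 else (p : K) ^ 3 * (p - 2) / ((p - 1) ^ 3 * (p + 1))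

theorem mul_eq_twinZetaFactor {p : ℕ} (hp : p.Prime) :
    (if 2 < p then 1 - 1 / ((p : ℝ) - 1) ^ 2 else 1) * (1 - ((p : ℝ) ^ 2)⁻¹)⁻¹ =
      twinZetaFactor ℝ p := by
  obtain rfl | hp2 := hp.two_le.eq_or_lt
  · norm_num [twinZetaFactor]
  have hp3 : (3 : ℝ) ≤ p := mod_cast hp2
  have h0 : (p : ℝ) ≠ 0 := by linarith
  have h1 : (p : ℝ) - 1 ≠ 0 := by linarith
  have h2 : (p : ℝ) + 1 ≠ 0 := by linarith
  have h_zeta : 1 - ((p : ℝ) ^ 2)⁻¹ = (p - 1) * (p + 1) / p ^ 2 := by field_simp; ring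
  rw [if_pos hp2, h_zeta, inv_div, twinZetaFactor, if_neg hp2.ne']
  field_simp
  ring

theorem twinZetaFactor_pos {p : ℕ} (hp : p.Prime) : 0 < twinZetaFactor ℝ p := by
  obtain rfl | hp2 := hp.two_le.eq_or_lt
  · norm_num [twinZetaFactor]
  have hp3 : (3 : ℝ) ≤ p := mod_cast hp2
  have : 0 < (p : ℝ) - 2 := by linarith
  have : 0 < (p : ℝ) - 1 := by linarith
  rw [twinZetaFactor, if_neg hp2.ne']
  positivity

theorem twinZetaFactor_le_one {p : ℕ} (hp : 3 ≤ p) : twinZetaFactor ℝ p ≤ 1 := by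
  have hp3 : (3 : ℝ) ≤ p := mod_cast hp
  have : 0 < (p : ℝ) - 1 := by linarith
  rw [twinZetaFactor, if_neg (by lia), div_le_one (by positivity)]
  nlinarith

/-- Bounds the tail of the Euler product: `∏ p ≥ n, twinZetaFactor p` is at least the inverse of
this. -/
noncomputable def tailBound (n : ℕ) : ℝ := 1 + 1 / ((n : ℝ) - 2) ^ 2

theorem one_le_tailBound (n : ℕ) : 1 ≤ tailBound n :=
  le_add_of_nonneg_right (by positivity)

theorem tailBound_succ_le {n : ℕ} (hn : 3 ≤ n) : tailBound (n + 1) ≤ tailBound n := by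
  have hn3 : (3 : ℝ) ≤ n := mod_cast hn
  have : 0 < (n : ℝ) - 2 := by linarith
  rw [tailBound, tailBound]
  push_cast
  gcongr
  linarith

theorem tailBound_succ_le_mul {n : ℕ} (hn : 3 ≤ n) :
    tailBound (n + 1) ≤ tailBound n * twinZetaFactor ℝ n := by
  obtain ⟨y, hy⟩ : ∃ y : ℝ, (n : ℝ) = y + 2 := ⟨n - 2, by ring⟩
  have hy0 : 0 < y := by
    have hn3 : (3 : ℝ) ≤ n := mod_cast hn
    linarith
  have h_left : tailBound (n + 1) = ((y + 1) ^ 2 + 1) / (y + 1) ^ 2 := by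
    rw [tailBound, Nat.cast_add, Nat.cast_one, hy, show y + 2 + 1 - 2 = y + 1 by ring]
    field_simp
  have h_right : tailBound n * twinZetaFactor ℝ n =
      (y ^ 2 + 1) * (y + 2) ^ 3 / (y * (y + 1) ^ 3 * (y + 3)) := by
    rw [tailBound, twinZetaFactor, if_neg (by lia), hy, show y + 2 - 2 = y by ring,
      show y + 2 - 1 = y + 1 by ring, show y + 2 + 1 = y + 3 by ring]
    field_simp
  rw [h_left, h_right, div_le_div_iff₀ (by positivity) (by positivity), ← sub_nonneg]
  ring_nf
  positivity

/-- The Euler product of `C₂ / 2 * ζ(2)` over the primes below `n`. -/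
noncomputable def twinZetaProd (n : ℕ) : ℝ := ∏ p ∈ n.primesBelow, twinZetaFactor ℝ p

theorem twinZetaProd_succ (n : ℕ) :
    twinZetaProd (n + 1) = twinZetaProd n * if n.Prime then twinZetaFactor ℝ n else 1 := by
  rw [twinZetaProd, twinZetaProd, Nat.primesBelow, Nat.primesBelow, Finset.prod_filter,
    Finset.prod_filter, Finset.prod_range_succ]

theorem twinZetaProd_pos (n : ℕ) : 0 < twinZetaProd n :=
  Finset.prod_pos fun _ hp => twinZetaFactor_pos (Nat.prime_of_mem_primesBelow hp)

theorem twinZetaProd_succ_le {n : ℕ} (hn : 3 ≤ n) : twinZetaProd (n + 1) ≤ twinZetaProd n := by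
  rw [twinZetaProd_succ]
  refine mul_le_of_le_one_right (twinZetaProd_pos n).le ?_
  split_ifs
  exacts [twinZetaFactor_le_one hn, le_rfl]

theorem twinZetaProd_div_tailBound_le_succ {n : ℕ} (hn : 3 ≤ n) :
    twinZetaProd n / tailBound n ≤ twinZetaProd (n + 1) / tailBound (n + 1) := by
  have h_step : tailBound (n + 1) ≤ tailBound n * if n.Prime then twinZetaFactor ℝ n else 1 := by
    split_ifs
    exacts [tailBound_succ_le_mul hn, by simpa using tailBound_succ_le hn]
  have h_pos (n : ℕ) : 0 < tailBound n := one_pos.trans_le (one_le_tailBound n)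
  rw [div_le_div_iff₀ (h_pos _) (h_pos _), twinZetaProd_succ, mul_assoc, mul_comm _ (tailBound n)]
  exact mul_le_mul_of_nonneg_left h_step (twinZetaProd_pos n).le

theorem tendsto_tailBound : Tendsto tailBound atTop (nhds 1) := by
  have h : Tendsto (fun n : ℕ => ((n : ℝ) - 2) ^ 2) atTop atTop :=
    (tendsto_pow_atTop two_ne_zero).comp
      (tendsto_atTop_add_const_right _ _ tendsto_natCast_atTop_atTop)
  have h_lim := h.inv_tendsto_atTop.const_add 1
  rw [add_zero] at h_lim
  exact h_lim.congr fun n => by rw [tailBound, one_div, Pi.inv_apply]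

theorem tendsto_prod_primesBelow_C2 :
    Tendsto (fun n : ℕ => ∏ p ∈ n.primesBelow, if 2 < p then 1 - 1 / ((p : ℝ) - 1) ^ 2 else 1)
      atTop (nhds (C2 / 2)) := by
  set s : Set ℕ := {p | p.Prime ∧ 2 < p} with hs
  set f : ℕ → ℝ := s.mulIndicator fun p => 1 - 1 / ((p : ℝ) - 1) ^ 2 with hf
  have h_mult : Multipliable f := by
    have h_eq : f = fun p => 1 + s.indicator (fun p => -(1 / ((p : ℝ) - 1) ^ 2)) p := by
      funext p
      by_cases hp : p ∈ s <;> simp [hf, hp, sub_eq_add_neg]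
    have h_summable : Summable fun p : ℕ => 4 * (1 / (p : ℝ) ^ 2) :=
      (Real.summable_one_div_nat_pow.2 one_lt_two).mul_left 4
    rw [h_eq]
    refine Real.multipliable_one_add_of_summable (.of_norm_bounded h_summable fun p => ?_)
    by_cases hp : p ∈ s
    · have hp3 : (3 : ℝ) ≤ p := mod_cast hp.2
      have : 0 < (p : ℝ) - 1 := by linarith
      rw [Set.indicator_of_mem hp, norm_neg, Real.norm_of_nonneg (by positivity), ← mul_div_assoc,
        div_le_div_iff₀ (by positivity) (by positivity)]
      nlinarith
    · rw [Set.indicator_of_notMem hp, norm_zero]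
      positivity
  have h_C2 : C2 / 2 = ∏' p, f p := by
    rw [C2, mul_div_cancel_left₀ _ two_ne_zero]
    exact tprod_subtype s fun p : ℕ => 1 - 1 / ((p : ℝ) - 1) ^ 2
  rw [h_C2]
  refine h_mult.hasProd.tendsto_prod_nat.congr fun n => ?_
  rw [Nat.primesBelow, Finset.prod_filter]
  refine Finset.prod_congr rfl fun p _ => ?_
  by_cases hp : p.Prime <;> by_cases hp2 : 2 < p <;> simp [hf, hs, hp, hp2]

theorem tendsto_prod_primesBelow_zeta_two :
    Tendsto (fun n : ℕ => ∏ p ∈ n.primesBelow, (1 - ((p : ℝ) ^ 2)⁻¹)⁻¹) atTop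
      (nhds (π ^ 2 / 6)) := by
  let f : ℕ →*₀ ℝ :=
    { toFun n := ((n : ℝ) ^ 2)⁻¹
      map_zero' := by simp
      map_one' := by simp
      map_mul' m n := by push_cast; rw [mul_pow, mul_inv] }
  have h_sum : HasSum f (π ^ 2 / 6) := by simpa [f] using hasSum_zeta_two
  rw [← h_sum.tsum_eq]
  exact EulerProduct.eulerProduct_completely_multiplicative h_sum.summable.norm

theorem tendsto_twinZetaProd : Tendsto twinZetaProd atTop (nhds (C2 / 2 * (π ^ 2 / 6))) := by
  refine (tendsto_prod_primesBelow_C2.mul tendsto_prod_primesBelow_zeta_two).congr fun n => ?_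
  rw [← Finset.prod_mul_distrib]
  exact Finset.prod_congr rfl fun p hp => mul_eq_twinZetaFactor (Nat.prime_of_mem_primesBelow hp)

theorem le_twinZetaProd {n : ℕ} (hn : 3 ≤ n) : C2 / 2 * (π ^ 2 / 6) ≤ twinZetaProd n := by
  have h_anti : Antitone fun k => twinZetaProd (k + n) :=
    antitone_nat_of_succ_le fun k => by
      rw [add_right_comm]; exact twinZetaProd_succ_le (by lia)
  simpa using h_anti.le_of_tendsto ((tendsto_add_atTop_iff_nat n).2 tendsto_twinZetaProd) 0

theorem twinZetaProd_div_tailBound_le {n : ℕ} (hn : 3 ≤ n) :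
    twinZetaProd n / tailBound n ≤ C2 / 2 * (π ^ 2 / 6) := by
  have h_mono : Monotone fun k => twinZetaProd (k + n) / tailBound (k + n) :=
    monotone_nat_of_le_succ fun k => by
      rw [add_right_comm]; exact twinZetaProd_div_tailBound_le_succ (by lia)
  have h_lim := tendsto_twinZetaProd.div tendsto_tailBound one_ne_zero
  rw [div_one] at h_lim
  simpa using h_mono.ge_of_tendsto ((tendsto_add_atTop_iff_nat n).2 h_lim) 0

theorem twinZetaProd_eq_dyadicFold {j : ℕ} (hj : j ≤ 14) :
    twinZetaProd (2 ^ j) = (dyadicFold (· * ·)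
      (fun p => bif isSmallPrime p then twinZetaFactor ℚ p else 1) j 0 : ℚ) := by
  rw [dyadicFold_mul, zero_add, Nat.Ico_zero_eq_range, twinZetaProd, Nat.primesBelow,
    Finset.prod_filter, Rat.cast_prod]
  refine Finset.prod_congr rfl fun p hp => ?_
  have hp_lt : p < 2 ^ 14 := (Finset.mem_range.1 hp).trans_le (Nat.pow_le_pow_right two_pos hj)
  simp only [Bool.cond_eq_ite, isSmallPrime_iff hp_lt, twinZetaFactor]
  split_ifs <;> push_cast <;> rfl

theorem twinZetaProd_mem_Icc : twinZetaProd (2 ^ 12) ∈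
    Set.Icc ((1.085922667 : ℚ) : ℝ) ((1.085922669 : ℚ) : ℝ) := by
  rw [twinZetaProd_eq_dyadicFold (by norm_num), Set.mem_Icc, Rat.cast_le, Rat.cast_le]
  decide +kernel

theorem C2_mem_Icc : C2 ∈ Set.Icc (1.3203235 : ℝ) 1.3203237 := by
  have h_prod := twinZetaProd_mem_Icc
  have h_le := le_twinZetaProd (n := 2 ^ 12) (by norm_num)
  have h_ge := twinZetaProd_div_tailBound_le (n := 2 ^ 12) (by norm_num)
  rw [div_le_iff₀ (one_pos.trans_le (one_le_tailBound _)), tailBound] at h_ge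
  norm_num at h_prod h_ge
  have h_pi_sq : 9.869604401 ≤ π ^ 2 ∧ π ^ 2 ≤ 9.869604402 := by
    constructor <;> nlinarith [Real.pi_gt_d20, Real.pi_lt_d20]
  constructor <;> nlinarith

end TwinPrimeConstant

section LogarithmicIntegral

/-- A partial sum of the series `-log (1 - z) = ∑ zⁱ / i`. -/
def logSeries {K : Type*} [Field K] (z : K) : K := ∑ i ∈ Finset.range 30, z ^ (i + 1) / (i + 1)

/-- A nine-digit approximation of `log x`, for `x` close to `2 ^ e`. It is rounded so that it can be
substituted into further rational expressions without blowing up their size. The fraction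
`287209 / 414355` is the approximation of `log 2` in `Real.log_two_near_10`. -/
def logApprox (e : ℕ) (x : ℚ) : ℚ :=
  ⌊10 ^ 9 * (e * (287209 / 414355) - logSeries (1 - x / 2 ^ e))⌋ / 10 ^ 9

theorem abs_sub_floor_mul_div_le (q : ℚ) : |q - ⌊10 ^ 9 * q⌋ / 10 ^ 9| ≤ 1 / 10 ^ 9 := by
  have h_le := Int.floor_le (10 ^ 9 * q)
  have h_lt := Int.lt_floor_add_one (10 ^ 9 * q)
  generalize ⌊10 ^ 9 * q⌋ = k at *
  rw [abs_le]
  constructor <;> linarith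

theorem abs_log_one_sub_add_logSeries_le {z : ℝ} (hz : |z| ≤ 1 / 2) :
    |log (1 - z) + logSeries z| ≤ 1 / 10 ^ 9 := by
  rw [add_comm]
  refine (Real.abs_log_sub_add_sum_range_le (by linarith) 30).trans ?_
  calc |z| ^ (30 + 1) / (1 - |z|) ≤ (1 / 2) ^ (30 + 1) / (1 - 1 / 2) := by gcongr
    _ ≤ 1 / 10 ^ 9 := by norm_num

theorem abs_log_sub_logApprox_le {e : ℕ} {x : ℚ} (he : e ≤ 26)
    (hx : |1 - (x : ℝ) / 2 ^ e| ≤ 1 / 2) : |log x - logApprox e x| ≤ 5 / 10 ^ 9 := by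
  set q : ℚ := e * (287209 / 414355) - logSeries (1 - x / 2 ^ e) with hq
  have h_floor : |(q : ℝ) - logApprox e x| ≤ 1 / 10 ^ 9 := by
    have h : |q - logApprox e x| ≤ 1 / 10 ^ 9 := abs_sub_floor_mul_div_le q
    simpa using Rat.cast_le (K := ℝ).2 h
  have hq_cast : (q : ℝ) = e * (287209 / 414355) - logSeries (1 - (x : ℝ) / 2 ^ e) := by
    simp [hq, logSeries]
  have h_series := abs_log_one_sub_add_logSeries_le hx
  have hx0 : (x : ℝ) ≠ 0 := by
    rintro h
    norm_num [h] at hx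
  have h_log : log x = e * log 2 + log (1 - (1 - (x : ℝ) / 2 ^ e)) := by
    rw [sub_sub_cancel, Real.log_div hx0 (by positivity), Real.log_pow]
    ring
  have h_two : |(e : ℝ) * (log 2 - 287209 / 414355)| ≤ 26 * (1 / 10 ^ 10) := by
    rw [abs_mul, Nat.abs_cast]
    gcongr
    exacts [mod_cast he, Real.log_two_near_10]
  rw [abs_le] at h_floor h_series h_two ⊢
  constructor <;> linarith

/-- A rational lower bound of `log x`, for `x` close to `2 ^ e`. -/
def logLower (e : ℕ) (x : ℚ) : ℚ := logApprox e x - 5 / 10 ^ 9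

/-- A rational upper bound of `log x`, for `x` close to `2 ^ e`. -/
def logUpper (e : ℕ) (x : ℚ) : ℚ := logApprox e x + 5 / 10 ^ 9

theorem logLower_mem_Icc {e : ℕ} {x : ℚ} (he : e ≤ 26) (hx : |1 - (x : ℝ) / 2 ^ e| ≤ 1 / 2) :
    (logLower e x : ℝ) ∈ Set.Icc (log x - 1 / 10 ^ 8) (log x) := by
  have h := abs_le.1 (abs_log_sub_logApprox_le he hx)
  rw [logLower]
  push_cast
  constructor <;> linarith

theorem logUpper_mem_Icc {e : ℕ} {x : ℚ} (he : e ≤ 26) (hx : |1 - (x : ℝ) / 2 ^ e| ≤ 1 / 2) :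
    (logUpper e x : ℝ) ∈ Set.Icc (log x) (log x + 1 / 10 ^ 8) := by
  have h := abs_le.1 (abs_log_sub_logApprox_le he hx)
  rw [logUpper]
  push_cast
  constructor <;> linarith

/-- A Taylor polynomial of the exponential function. -/
noncomputable def expTaylor (u : ℝ) : ℝ := ∑ n ∈ Finset.range 68, u ^ n / n.factorial

theorem expTaylor_mem_Icc {u : ℝ} (hu : u ∈ Set.Icc 0 18) :
    expTaylor u ∈ Set.Icc ((1 - 1 / 10 ^ 10) * exp u) (exp u) := by
  obtain ⟨hu0, hu18⟩ := hu
  refine ⟨?_, Real.sum_le_exp_of_nonneg hu0 68⟩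
  have h_norm : ‖(u : ℂ)‖ = u := Complex.norm_of_nonneg hu0
  have h_bound := Complex.exp_bound' (x := u) (n := 68) (by rw [h_norm]; norm_num; linarith)
  have h_cast : Complex.exp u - ∑ m ∈ Finset.range 68, (u : ℂ) ^ m / m.factorial =
      ((exp u - expTaylor u : ℝ) : ℂ) := by
    rw [expTaylor]
    push_cast
    rfl
  rw [h_cast, h_norm, Complex.norm_real] at h_bound
  have h_small : u ^ 68 / (68).factorial * 2 ≤ 1 / 10 ^ 10 := by
    calc u ^ 68 / (68).factorial * 2 ≤ 18 ^ 68 / (68).factorial * 2 := by gcongr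
      _ ≤ 1 / 10 ^ 10 := by norm_num [Nat.factorial]
  have h_le := (Real.le_norm_self _).trans (h_bound.trans h_small)
  have h_one_le := Real.one_le_exp hu0
  linarith

/-- The polynomial part of a primitive of `expTaylor u / u²`. -/
def primitivePoly {K : Type*} [Field K] (u : K) : K :=
  ∑ n ∈ Finset.range 66, u ^ (n + 1) / ((n + 1) * (n + 2).factorial)

/-- A primitive of `expTaylor u / u²` on the positive reals. -/
noncomputable def expTaylorPrimitive (u : ℝ) : ℝ := -1 / u + log u + primitivePoly u

theorem hasDerivAt_primitivePoly (u : ℝ) :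
    HasDerivAt primitivePoly (∑ n ∈ Finset.range 66, u ^ n / ((n + 2).factorial : ℝ)) u := by
  refine HasDerivAt.fun_sum fun n _ => ((hasDerivAt_pow (n + 1) u).div_const _).congr_deriv ?_
  have : (n : ℝ) + 1 ≠ 0 := by positivity
  rw [Nat.add_sub_cancel, Nat.cast_succ, mul_div_mul_left _ _ this]

theorem expTaylor_eq (u : ℝ) :
    expTaylor u = 1 + u + u ^ 2 * ∑ n ∈ Finset.range 66, u ^ n / ((n + 2).factorial : ℝ) := by
  rw [expTaylor, Finset.sum_range_succ', Finset.sum_range_succ', Finset.mul_sum,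
    Finset.sum_congr rfl fun n _ => show u ^ (n + 1 + 1) / ((n + 1 + 1).factorial : ℝ) =
      u ^ 2 * (u ^ n / (n + 2).factorial) by rw [add_assoc, pow_add]; ring]
  simp only [zero_add, pow_one, pow_zero, Nat.factorial_one, Nat.factorial_zero, Nat.cast_one,
    div_one]
  ring

theorem hasDerivAt_expTaylorPrimitive {u : ℝ} (hu : u ≠ 0) :
    HasDerivAt expTaylorPrimitive (expTaylor u / u ^ 2) u := by
  have h_inv : HasDerivAt (fun v : ℝ => -1 / v) (1 / u ^ 2) u :=
    ((hasDerivAt_inv hu).neg.congr_deriv (by ring)).congr_of_eventuallyEq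
      (.of_forall fun v => by simp [neg_div])
  refine ((h_inv.add (Real.hasDerivAt_log hu)).add (hasDerivAt_primitivePoly u)).congr_deriv ?_
  rw [expTaylor_eq]
  field_simp

theorem expTaylorPrimitive_mono {u v : ℝ} (hu : 0 < u) (huv : u ≤ v) :
    expTaylorPrimitive u ≤ expTaylorPrimitive v := by
  have h_inv : -1 / u ≤ -1 / v := by
    rw [neg_div, neg_div, neg_le_neg_iff]
    exact one_div_le_one_div_of_le hu huv
  have h_poly : primitivePoly u ≤ primitivePoly v :=
    Finset.sum_le_sum fun n _ => by gcongr
  exact add_le_add (add_le_add h_inv (Real.log_le_log hu huv)) h_poly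

theorem Li2_nonneg {x : ℝ} (hx : 2 ≤ x) : 0 ≤ Li2 x :=
  intervalIntegral.integral_nonneg hx fun _ _ => by positivity

theorem hasDerivAt_expTaylorPrimitive_log {t : ℝ} (ht : 1 < t) :
    HasDerivAt (fun s => expTaylorPrimitive (log s)) (expTaylor (log t) / log t ^ 2 * t⁻¹) t :=
  (hasDerivAt_expTaylorPrimitive (Real.log_pos ht).ne').comp t
    (Real.hasDerivAt_log (one_pos.trans ht).ne')

theorem expTaylor_log_div_mem_Icc {t : ℝ} (ht : 1 < t) (ht18 : log t ≤ 18) :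
    expTaylor (log t) / log t ^ 2 * t⁻¹ ∈
      Set.Icc ((1 - 1 / 10 ^ 10) * (1 / log t ^ 2)) (1 / log t ^ 2) := by
  have ht0 : 0 < t := one_pos.trans ht
  have h_log := Real.log_pos ht
  have h_taylor := expTaylor_mem_Icc ⟨h_log.le, ht18⟩
  rw [Real.exp_log ht0] at h_taylor
  rw [show expTaylor (log t) / log t ^ 2 * t⁻¹ = expTaylor (log t) / t * (1 / log t ^ 2) by ring]
  exact ⟨by gcongr; exact (le_div_iff₀ ht0).2 h_taylor.1,
    mul_le_of_le_one_left (by positivity) ((div_le_one ht0).2 h_taylor.2)⟩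

/-- The substitution `u = log t` turns `Li₂` into the integral of `eᵘ / u²`. -/
theorem expTaylorPrimitive_log_sub_mem_Icc {x : ℝ} (hx : 2 ≤ x) (hx18 : log x ≤ 18) :
    expTaylorPrimitive (log x) - expTaylorPrimitive (log 2) ∈
      Set.Icc ((1 - 1 / 10 ^ 10) * Li2 x) (Li2 x) := by
  have h_one_lt {t : ℝ} (ht : t ∈ Set.Icc 2 x) : 1 < t := one_lt_two.trans_le ht.1
  have h_ne_zero {t : ℝ} (ht : t ∈ Set.Icc 2 x) : t ≠ 0 := (one_pos.trans (h_one_lt ht)).ne'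
  have h_sq_ne_zero (t : ℝ) (ht : t ∈ Set.Icc 2 x) : log t ^ 2 ≠ 0 :=
    pow_ne_zero 2 (Real.log_pos (h_one_lt ht)).ne'
  have h_cont_log : ContinuousOn log (Set.Icc 2 x) :=
    Real.continuousOn_log.mono fun t ht => h_ne_zero ht
  have h_int : IntervalIntegrable (fun t => 1 / log t ^ 2) MeasureTheory.volume 2 x :=
    (continuousOn_const.div (h_cont_log.pow 2) h_sq_ne_zero).intervalIntegrable_of_Icc hx
  have h_cont_taylor : Continuous expTaylor := by
    unfold expTaylor
    fun_prop
  have h_int_taylor : IntervalIntegrable (fun t => expTaylor (log t) / log t ^ 2 * t⁻¹)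
      MeasureTheory.volume 2 x :=
    (((h_cont_taylor.comp_continuousOn h_cont_log).div (h_cont_log.pow 2) h_sq_ne_zero).mul
      (continuousOn_id.inv₀ fun t ht => h_ne_zero ht)).intervalIntegrable_of_Icc hx
  have h_bounds {t : ℝ} (ht : t ∈ Set.Icc 2 x) := expTaylor_log_div_mem_Icc (h_one_lt ht)
    ((Real.log_le_log (one_pos.trans (h_one_lt ht)) ht.2).trans hx18)
  rw [← intervalIntegral.integral_eq_sub_of_hasDerivAt
    (fun t ht => hasDerivAt_expTaylorPrimitive_log (h_one_lt (uIcc_of_le hx ▸ ht))) h_int_taylor,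
    Li2, ← intervalIntegral.integral_const_mul]
  exact ⟨intervalIntegral.integral_mono_on hx (h_int.const_mul _) h_int_taylor fun t ht =>
      (h_bounds ht).1,
    intervalIntegral.integral_mono_on hx h_int_taylor h_int fun t ht => (h_bounds ht).2⟩

/-- A rational lower bound of `expTaylorPrimitive u`, for `u` close to `2 ^ e`. -/
def primitiveLower (e : ℕ) (u : ℚ) : ℚ := -1 / u + logLower e u + primitivePoly u

/-- A rational upper bound of `expTaylorPrimitive u`, for `u` close to `2 ^ e`. -/
def primitiveUpper (e : ℕ) (u : ℚ) : ℚ := -1 / u + logUpper e u + primitivePoly u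

theorem cast_primitivePoly (u : ℚ) : ((primitivePoly u : ℚ) : ℝ) = primitivePoly (u : ℝ) := by
  simp [primitivePoly]

theorem primitiveLower_le {e : ℕ} {u : ℚ} (he : e ≤ 26) (hu : |1 - (u : ℝ) / 2 ^ e| ≤ 1 / 2) :
    primitiveLower e u ≤ expTaylorPrimitive u := by
  rw [primitiveLower, expTaylorPrimitive, Rat.cast_add, cast_primitivePoly]
  push_cast
  gcongr
  exact (logLower_mem_Icc he hu).2

theorem le_primitiveUpper {e : ℕ} {u : ℚ} (he : e ≤ 26) (hu : |1 - (u : ℝ) / 2 ^ e| ≤ 1 / 2) :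
    expTaylorPrimitive u ≤ primitiveUpper e u := by
  rw [primitiveUpper, expTaylorPrimitive, Rat.cast_add, cast_primitivePoly]
  push_cast
  gcongr
  exact (logUpper_mem_Icc he hu).1

/-- A rational lower bound of `Li₂ x`, for `x` close to `2 ^ 25`. The exponents `25`, `4`, `1` and
`0` are those of the powers of two close to `x`, `log x`, `2` and `log 2`. -/
def li2Lower (x : ℚ) : ℚ := primitiveLower 4 (logLower 25 x) - primitiveUpper 0 (logUpper 1 2)

/-- A rational upper bound of `Li₂ x`, for `x` close to `2 ^ 25`. -/
def li2Upper (x : ℚ) : ℚ :=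
  (primitiveUpper 4 (logUpper 25 x) - primitiveLower 0 (logLower 1 2)) / (1 - 1 / 10 ^ 10)

theorem log_mem_Icc {x : ℝ} (hx : x ∈ Set.Icc (2 ^ 24) (3 * 2 ^ 24)) : log x ∈ Set.Icc 16 18 := by
  have hx0 : 0 < x := by linarith [hx.1]
  have h_lo := Real.log_le_log (by positivity) hx.1
  have h_hi := Real.log_le_log hx0 (hx.2.trans (by norm_num : (3 : ℝ) * 2 ^ 24 ≤ 2 ^ 25 * (3 / 2)))
  rw [Real.log_mul (by positivity) (by positivity), Real.log_pow] at h_hi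
  rw [Real.log_pow] at h_lo
  have h_three_halves := Real.log_le_sub_one_of_pos (x := 3 / 2) (by norm_num)
  have := Real.log_two_gt_d9
  have := Real.log_two_lt_d9
  push_cast at h_lo h_hi
  constructor <;> linarith

theorem Li2_mem_Icc {x : ℚ} (hx : (x : ℝ) ∈ Set.Icc (2 ^ 24) (3 * 2 ^ 24)) :
    Li2 x ∈ Set.Icc (li2Lower x : ℝ) (li2Upper x) := by
  have h_near : |1 - (x : ℝ) / 2 ^ 25| ≤ 1 / 2 := by
    rw [abs_le]
    constructor <;> linarith [hx.1, hx.2]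
  have h_near_two : |1 - ((2 : ℚ) : ℝ) / 2 ^ 1| ≤ 1 / 2 := by norm_num
  have h_lower := logLower_mem_Icc (by norm_num) h_near
  have h_upper := logUpper_mem_Icc (by norm_num) h_near
  have h_lower_two := logLower_mem_Icc (by norm_num) h_near_two
  have h_upper_two := logUpper_mem_Icc (by norm_num) h_near_two
  rw [Rat.cast_ofNat] at h_lower_two h_upper_two
  have h_log := log_mem_Icc hx
  have h_log_two := Real.log_two_near_10
  simp only [Set.mem_Icc, abs_le] at h_lower h_upper h_lower_two h_upper_two h_log h_log_two
  have h_lo :=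
    (primitiveLower_le (e := 4) (by norm_num) (abs_le.2 ⟨by linarith, by linarith⟩)).trans
      (expTaylorPrimitive_mono (by linarith) h_lower.2)
  have h_hi := (expTaylorPrimitive_mono (by linarith) h_upper.1).trans
    (le_primitiveUpper (e := 4) (by norm_num) (abs_le.2 ⟨by linarith, by linarith⟩))
  have h_lo_two :=
    (primitiveLower_le (e := 0) (by norm_num) (abs_le.2 ⟨by linarith, by linarith⟩)).trans
      (expTaylorPrimitive_mono (by linarith) h_lower_two.2)
  have h_hi_two := (expTaylorPrimitive_mono (by linarith) h_upper_two.1).trans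
    (le_primitiveUpper (e := 0) (by norm_num) (abs_le.2 ⟨by linarith, by linarith⟩))
  have h_Li2 := expTaylorPrimitive_log_sub_mem_Icc (by linarith [hx.1]) (log_mem_Icc hx).2
  rw [li2Lower, li2Upper]
  push_cast
  refine ⟨?_, (le_div_iff₀ (by norm_num)).2 ?_⟩ <;> linarith [h_Li2.1, h_Li2.2]

end LogarithmicIntegral

section Segments

/-- The indices `n` of the points `6 * n` between which `d₂` changes sign, together with the values
of `twinIndexCount n`. They were found by a search for `n` with `|d₂ (6 * n)| ≥ 0.05`. -/
def witnesses : List (ℕ × ℕ) :=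
  [(4171394, 130663), (5879037, 176057), (5879198, 176064), (5879605, 176071), (5879619, 176073),
   (5879650, 176073), (5879651, 176074), (5879688, 176074), (5879689, 176075), (5879767, 176075),
   (5879791, 176078), (5880947, 176102), (5892594, 176437), (5897668, 176545), (5903063, 176705),
   (5904687, 176729), (5904688, 176730), (5904707, 176730), (5905728, 176766), (5907842, 176811),
   (5908106, 176823), (5908352, 176825), (5909328, 176860), (5910473, 176881), (5910489, 176883),
   (5911140, 176895), (5911406, 176906), (5911465, 176906), (5911494, 176910), (5911678, 176911),
   (5911713, 176914), (5911745, 176914), (5911746, 176915), (5911773, 176915), (5911868, 176920),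
   (5918848, 177086), (5932646, 177463), (5932675, 177463), (5932676, 177464), (5932733, 177464),
   (5932734, 177465), (5932770, 177465), (6383131, 189445), (7537432, 218918), (7537433, 218919),
   (7542817, 219042), (7545688, 219129), (7545960, 219132), (7546039, 219138), (7548793, 219198),
   (7550694, 219257), (7550715, 219257), (7550716, 219258), (7550790, 219258), (7550798, 219260),
   (7550837, 219260), (7550869, 219263), (7551010, 219264), (7551011, 219265), (7551038, 219265),
   (7551039, 219266), (7551107, 219266), (7551139, 219268), (7551155, 219268), (7551156, 219269),
   (7551197, 219269), (7551198, 219270), (7551252, 219270), (7551253, 219271), (7551275, 219271),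
   (7552644, 219316), (7553397, 219325), (7553398, 219326), (7553450, 219326), (7553451, 219327),
   (7553487, 219327), (7553488, 219328), (7553508, 219328), (7553613, 219334), (7553943, 219339),
   (7553981, 219342), (7554092, 219342), (7554958, 219374), (7556068, 219392), (7556078, 219394),
   (7556127, 219394), (7556154, 219396), (7556192, 219396), (7556193, 219397), (7556402, 219399),
   (7556694, 219410), (7556748, 219410), (7556749, 219411), (7556845, 219411), (7556863, 219414),
   (7556882, 219414), (7556883, 219415), (7556920, 219415), (7556921, 219416), (7556983, 219416),
   (7556984, 219417), (7557027, 219417), (7557044, 219419), (7557518, 219428), (7557611, 219433),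
   (7557638, 219433), (7562824, 219586), (7568228, 219702), (7568324, 219706), (7568348, 219706),
   (7568349, 219707), (7568820, 219712), (7569031, 219724), (7569130, 219724), (7569139, 219727),
   (7569177, 219727), (7569189, 219729), (7569357, 219731), (7569386, 219733), (7569397, 219733),
   (7569398, 219734), (7569552, 219735), (7569621, 219741), (7569760, 219741), (7569778, 219743),
   (7569818, 219743), (7569846, 219745), (7570085, 219747), (7570403, 219759), (7570427, 219759),
   (7570428, 219760), (7570518, 219760), (7570879, 219775), (7571048, 219775), (7571103, 219780),
   (7571273, 219780), (7571898, 219808), (7573143, 219828), (7573144, 219829), (7574178, 219846),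
   (7578826, 219988), (7580867, 220025), (7580879, 220027), (7580947, 220027), (7580948, 220028),
   (7581688, 220034), (7584328, 220115), (7584405, 220115), (7584406, 220116), (7584427, 220116),
   (7585171, 220146), (7587135, 220185), (7587164, 220187), (7587223, 220187), (7587224, 220188),
   (7587360, 220189), (7587431, 220193), (7587445, 220193), (7587493, 220196), (7587563, 220196),
   (7587581, 220198), (7587662, 220198), (7587663, 220199), (7587697, 220199), (7624998, 221205),
   (7711083, 223331), (7712289, 223371), (7712528, 223373), (7712569, 223378), (7712618, 223378),
   (7712753, 223385), (7713018, 223388), (7713031, 223390), (7713062, 223390), (7783903, 225280),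
   (7891858, 227930), (7892093, 227942), (7892647, 227951), (7892683, 227954), (7893023, 227958),
   (7893178, 227965), (7893218, 227965), (7893219, 227966), (7895317, 228011), (7896383, 228046),
   (7896413, 228046), (7896508, 228052), (7897740, 228074), (7897923, 228085), (7897972, 228085),
   (7897991, 228087), (7898102, 228088), (7913406, 228507), (7946650, 229317), (7946809, 229325),
   (7946888, 229325), (7946923, 229328), (7946998, 229328), (7947013, 229330), (7947075, 229330),
   (7947101, 229332), (7947118, 229332), (7947119, 229333), (7947170, 229333), (7947171, 229334),
   (7947198, 229334), (7947313, 229340), (7947438, 229340), (7947439, 229341), (7947607, 229342),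
   (7947673, 229349), (7947842, 229350), (7947843, 229351), (7948187, 229356), (7948256, 229362),
   (7948300, 229362), (7948308, 229364), (7948573, 229365), (7948763, 229374), (7948775, 229374),
   (7948846, 229378), (7949105, 229381), (7949201, 229387), (7950108, 229399), (7951311, 229442),
   (7951780, 229448), (7952083, 229460), (7952227, 229461), (7952228, 229462), (7952247, 229462),
   (7952248, 229463), (7952290, 229463), (7952291, 229464), (7952350, 229464), (7952351, 229465),
   (7952368, 229465), (7952419, 229469), (7952593, 229470), (7952594, 229471)]

/-- The left endpoint of the `i`-th segment of indices that is sieved. -/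
def segmentStart (i : ℕ) : ℕ := 2048 + i * 2 ^ 18

/-- The value of `twinIndexCount (segmentStart i)`. -/
def checkpoint (i : ℕ) : ℕ :=
  [240, 12173, 21881, 30993, 39599, 47960, 56165, 64143, 71933, 79617, 87298, 94812, 102283,
    109582, 116836, 124127, 131302, 138417, 145355, 152382, 159439, 166313, 173261, 180090,
    187034, 193797, 200662, 207276, 213956, 220651, 227320, 233904].getD i 0

/-- The values of `twinIndexCount` to be certified on the `i`-th segment: the next checkpoint, and
the witnesses in the segment. -/
def segmentCounts (i : ℕ) : List (ℕ × ℕ) :=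
  (segmentStart (i + 1), checkpoint (i + 1)) ::
    witnesses.filter fun w => segmentStart i ≤ w.1 ∧ w.1 ≤ segmentStart (i + 1)

theorem mem_Icc_of_mem_segmentCounts {i : ℕ} {w : ℕ × ℕ} (hw : w ∈ segmentCounts i) :
    w.1 ∈ Set.Icc (segmentStart i) (segmentStart (i + 1)) := by
  rw [segmentCounts, List.mem_cons, List.mem_filter, decide_eq_true_iff] at hw
  obtain rfl | ⟨-, hw⟩ := hw
  · simp [segmentStart, add_mul]
  · exact hw

theorem bitCount_sieve_segment : ∀ i < 31, ∀ w ∈ segmentCounts i,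
    bitCount 16 (2 ^ 14) (sieve 13 (segmentStart i) (16 * 2 ^ 14) % 2 ^ (w.1 - segmentStart i)) +
      w.2 = w.1 - segmentStart i + checkpoint i := by
  decide +kernel

theorem twinIndexCount_of_mem_segmentCounts {i : ℕ} (hi : i < 31)
    (h : twinIndexCount (segmentStart i) = checkpoint i) {w : ℕ × ℕ} (hw : w ∈ segmentCounts i) :
    twinIndexCount w.1 = w.2 := by
  obtain ⟨h_le, h_le'⟩ := mem_Icc_of_mem_segmentCounts hw
  have h_check := bitCount_sieve_segment i hi w hw
  rw [segmentStart] at h_le'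
  have h_count := bitCount_sieve_add_twinIndexCount (j := 13) (w := 16) (m := 2 ^ 14)
    (a := segmentStart i) (n := w.1 - segmentStart i) (by norm_num) (by norm_num)
    (by rw [segmentStart]; lia) (by rw [segmentStart]; lia) (by rw [segmentStart]; lia)
  rw [Nat.add_sub_cancel' h_le] at h_count
  lia

theorem twinIndexCount_segmentStart {i : ℕ} (hi : i ≤ 31) :
    twinIndexCount (segmentStart i) = checkpoint i := by
  induction i with
  | zero =>
    rw [show segmentStart 0 = 2 ^ 11 from rfl, twinIndexCount_eq_dyadicFold le_rfl]
    decide +kernel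
  | succ i ih =>
    exact twinIndexCount_of_mem_segmentCounts (w := (segmentStart (i + 1), checkpoint (i + 1)))
      hi (ih (by lia)) List.mem_cons_self

theorem exists_mem_segmentCounts : ∀ w ∈ witnesses, ∃ i < 31, w ∈ segmentCounts i := by
  decide +kernel

theorem twinIndexCount_of_mem_witnesses {w : ℕ × ℕ} (hw : w ∈ witnesses) :
    twinIndexCount w.1 = w.2 := by
  obtain ⟨i, hi, hwi⟩ := exists_mem_segmentCounts w hw
  exact twinIndexCount_of_mem_segmentCounts hi (twinIndexCount_segmentStart hi.le) hwi

end Segments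

section SignChanges

theorem two_le_six_mul {n : ℕ} (hn : n ∈ Set.Icc (3 * 2 ^ 20) (2 ^ 23)) : 2 ≤ 6 * (n : ℝ) := by
  have := hn.1
  norm_cast
  lia

theorem Li2_six_mul_mem_Icc {n : ℕ} (hn : n ∈ Set.Icc (3 * 2 ^ 20) (2 ^ 23)) :
    Li2 (6 * n) ∈ Set.Icc (li2Lower (6 * n) : ℝ) (li2Upper (6 * n)) := by
  have h_lo : 3 * 2 ^ 20 ≤ (n : ℝ) := mod_cast hn.1
  have h_hi : (n : ℝ) ≤ 2 ^ 23 := mod_cast hn.2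
  simpa using Li2_mem_Icc (x := 6 * n) (by push_cast; constructor <;> linarith)

theorem d2_six_mul {n : ℕ} (hn : 0 < n) :
    d2 (6 * n) = 1 + twinIndexCount n - C2 * Li2 (6 * n) := by
  rw [d2, piTwin_six_mul hn, Nat.cast_add, Nat.cast_one]

theorem d2_six_mul_pos {n : ℕ} (hn : n ∈ Set.Icc (3 * 2 ^ 20) (2 ^ 23))
    (h : 1.3203237 * li2Upper (6 * n) < 1 + twinIndexCount n) : 0 < d2 (6 * n) := by
  have h_real : (1.3203237 : ℝ) * li2Upper (6 * n) < 1 + twinIndexCount n := by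
    simpa using Rat.cast_lt (K := ℝ).2 h
  have h_Li2_le := (Li2_six_mul_mem_Icc hn).2
  have h_nonneg := Li2_nonneg (two_le_six_mul hn)
  have h_mul := mul_le_mul C2_mem_Icc.2 h_Li2_le h_nonneg (by norm_num)
  rw [d2_six_mul (by have := hn.1; lia)]
  linarith

theorem d2_six_mul_neg {n : ℕ} (hn : n ∈ Set.Icc (3 * 2 ^ 20) (2 ^ 23))
    (h : 1 + twinIndexCount n < 1.3203235 * li2Lower (6 * n)) : d2 (6 * n) < 0 := by
  have h_real : (1 : ℝ) + twinIndexCount n < 1.3203235 * li2Lower (6 * n) := by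
    simpa using Rat.cast_lt (K := ℝ).2 h
  have h_Li2_ge := (Li2_six_mul_mem_Icc hn).1
  have h_nonneg := Li2_nonneg (two_le_six_mul hn)
  have h_mul := mul_le_mul_of_nonneg_right C2_mem_Icc.1 h_nonneg
  rw [d2_six_mul (by have := hn.1; lia)]
  linarith

/-- The `i`-th entry of `witnesses`. -/
def witness (i : ℕ) : ℕ × ℕ := witnesses.getD i (0, 0)

theorem twinIndexCount_witness {i : ℕ} (hi : i < 239) :
    twinIndexCount (witness i).1 = (witness i).2 := by
  rw [witness, List.getD_eq_getElem _ _ (show i < witnesses.length from hi)]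
  exact twinIndexCount_of_mem_witnesses (List.getElem_mem _)

theorem witness_mem_Icc : ∀ i < 239, (witness i).1 ∈ Set.Icc (3 * 2 ^ 20) (2 ^ 23) := by
  decide +kernel

theorem witness_lt_succ : ∀ i < 238, (witness i).1 < (witness (i + 1)).1 := by
  decide +kernel

set_option maxHeartbeats 1000000 in
-- The kernel bounds 239 logarithmic integrals in exact rational arithmetic.
theorem witness_li2_bound : ∀ i < 239,
    if Even i then 1.3203237 * li2Upper (6 * (witness i).1) < 1 + (witness i).2
    else 1 + (witness i).2 < 1.3203235 * li2Lower (6 * (witness i).1) := by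
  decide +kernel

theorem neg_one_pow_mul_d2_witness_pos {i : ℕ} (hi : i < 239) :
    0 < (-1) ^ i * d2 (6 * (witness i).1) := by
  have h_bound := witness_li2_bound i hi
  rw [← twinIndexCount_witness hi] at h_bound
  split_ifs at h_bound with h_even
  · rw [h_even.neg_one_pow, one_mul]
    exact d2_six_mul_pos (witness_mem_Icc i hi) h_bound
  · rw [(Nat.not_even_iff_odd.1 h_even).neg_one_pow, neg_one_mul, neg_pos]
    exact d2_six_mul_neg (witness_mem_Icc i hi) h_bound

theorem mul_succ_neg_of_neg_one_pow_mul_pos {R : Type*} [CommRing R] [LinearOrder R]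
    [IsStrictOrderedRing R] {f : ℕ → R} {i : ℕ} (hi : 0 < (-1) ^ i * f i)
    (hi' : 0 < (-1) ^ (i + 1) * f (i + 1)) : f i * f (i + 1) < 0 := by
  have h := mul_pos hi hi'
  rwa [mul_mul_mul_comm, ← pow_add, Odd.neg_one_pow ⟨i, by ring⟩, neg_one_mul, neg_pos] at h

end SignChanges

/-- `d₂` has at least 238 sign changes on the interval `(2, 2^26)`. -/
theorem d2_sign_changes_238 :
    ∃ x : ℕ → ℝ,
      (∀ i ≤ 238, 2 < x i ∧ x i < 2 ^ 26) ∧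
      (∀ i < 238, x i < x (i + 1)) ∧
      (∀ i < 238, d2 (x i) * d2 (x (i + 1)) < 0) := by
  refine ⟨fun i => 6 * (witness i).1, fun i hi => ?_, fun i hi => ?_, fun i hi => ?_⟩ <;>
    beta_reduce
  · obtain ⟨h_lo, h_hi⟩ := witness_mem_Icc i (by lia)
    constructor <;> norm_cast <;> lia
  · have h_lt := witness_lt_succ i hi
    gcongr
  · exact mul_succ_neg_of_neg_one_pow_mul_pos (f := fun i => d2 (6 * (witness i).1))
      (neg_one_pow_mul_d2_witness_pos (by lia)) (neg_one_pow_mul_d2_witness_pos (by lia))
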